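/- Let k be a field of characteristic 2 and R = k[x,y]/(x², y²), with M₀ = R/(x), M₁ = R/(y), M∞ = R/(x+y), k = R/(x,y), augmentations ε, ε₀, ε₁, ε∞, and the R-linear maps h : M₀ × M₁ × M∞ → R, h(m₀,m₁,m∞) = x·m₀ + y·m₁ + (x+y)·m∞; g : R × k × k → M₀ × M₁ × M∞, g(a,b,c) = (ā + c·ȳ, ā + b·x̄, ā + b·x̄ + c·ȳ); f : M₀ × M₁ × M∞ → R × k × k, f(m₀,m₁,m∞) = (x·m₀ + y·m₁ + (x+y)·m∞, ε₀(m₀) + ε∞(m∞), ε₁(m₁) + ε∞(m∞)). For an R-module N, let Soc(N) = {n ∈ N : x·n = 0 and y·n = 0}. Then Soc(R) = k·(xy), Soc(M₀) = k·ȳ, Soc(M₁) = k·x̄, Soc(M∞) = k·x̄, and Soc(k) = k; the maps ε, h, g, f carry Soc into Soc; and for the restricted maps: ε vanishes on Soc(R); the range of the restriction of h (to Soc(M₀) × Soc(M₁) × Soc(M∞)) equals Soc(R); the range of the restriction of g (to Soc(R) × k × k) equals the kernel of the restriction of h; the range of the restriction of f equals the kernel of the restriction of g; and the range of the restriction of g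 equals the kernel of the restriction of f. Consequently, the subcomplex of elements annihilated by both x and y of the complex ⋯ →g M₀×M₁×M∞ →f R×k×k →g M₀×M₁×M∞ →h R →ε k → 0 has cohomology isomorphic to k in degree 0 and zero cohomology in every other degree. -/

import Mathlib

open MvPolynomial

noncomputable section

/-- The ideal `(x², y²)` of `k[x,y]`. -/
def IKF (k : Type*) [Field k] : Ideal (MvPolynomial (Fin 2) k) :=
  Ideal.span {(X 0 : MvPolynomial (Fin 2) k) ^ 2, (X 1 : MvPolynomial (Fin 2) k) ^ 2}

/-- `R = k[x,y]/(x², y²)` (isomorphic to the group algebra of the Klein four-group). -/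
abbrev KFR (k : Type*) [Field k] : Type _ := MvPolynomial (Fin 2) k ⧸ IKF k

/-- The class `x` in `R`. -/
def xR (k : Type*) [Field k] : KFR k := Ideal.Quotient.mk (IKF k) (X 0)

/-- The class `y` in `R`. -/
def yR (k : Type*) [Field k] : KFR k := Ideal.Quotient.mk (IKF k) (X 1)

/-- `M₀ = R/(x)`. -/
abbrev M0 (k : Type*) [Field k] : Type _ := KFR k ⧸ Ideal.span {xR k}

/-- `M₁ = R/(y)`. -/
abbrev M1 (k : Type*) [Field k] : Type _ := KFR k ⧸ Ideal.span {yR k}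

/-- `M∞ = R/(x+y)`. -/
abbrev Minf (k : Type*) [Field k] : Type _ := KFR k ⧸ Ideal.span {xR k + yR k}

/-- The quotient map `R → M₀`. -/
def mk0 (k : Type*) [Field k] : KFR k →+* M0 k := Ideal.Quotient.mk _

/-- The quotient map `R → M₁`. -/
def mk1 (k : Type*) [Field k] : KFR k →+* M1 k := Ideal.Quotient.mk _

/-- The quotient map `R → M∞`. -/
def mkinf (k : Type*) [Field k] : KFR k →+* Minf k := Ideal.Quotient.mk _

/-- `Soc(R)`: elements of `R` annihilated by both `x` and `y`. -/
def SocR (k : Type*) [Field k] : Set (KFR k) := {r | xR k * r = 0 ∧ yR k * r = 0}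

/-- `Soc(M₀)`: elements of `M₀` annihilated by both `x` and `y` (acting through `R`). -/
def SocM0 (k : Type*) [Field k] : Set (M0 k) :=
  {m | mk0 k (xR k) * m = 0 ∧ mk0 k (yR k) * m = 0}

/-- `Soc(M₁)`. -/
def SocM1 (k : Type*) [Field k] : Set (M1 k) :=
  {m | mk1 k (xR k) * m = 0 ∧ mk1 k (yR k) * m = 0}

/-- `Soc(M∞)`. -/
def SocMinf (k : Type*) [Field k] : Set (Minf k) :=
  {m | mkinf k (xR k) * m = 0 ∧ mkinf k (yR k) * m = 0}

lemma kf_xx (k : Type*) [Field k] : xR k * xR k = 0 := by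
  rw [xR, ← map_mul, Ideal.Quotient.eq_zero_iff_mem, ← pow_two]
  exact Ideal.subset_span (by simp)

lemma kf_yy (k : Type*) [Field k] : yR k * yR k = 0 := by
  rw [yR, ← map_mul, Ideal.Quotient.eq_zero_iff_mem, ← pow_two]
  exact Ideal.subset_span (by simp)

/-- The structure map `k → R`. -/
def kfC (k : Type*) [Field k] : k →+* KFR k := algebraMap k (KFR k)

lemma kf_rep (k : Type*) [Field k] (r : KFR k) : ∃ a b c d : k,
    r = kfC k a + kfC k b * xR k + kfC k c * yR k + kfC k d * (xR k * yR k) := by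
  obtain ⟨P, rfl⟩ := Ideal.Quotient.mk_surjective r
  have hx := kf_xx k
  have hy := kf_yy k
  induction P using MvPolynomial.induction_on with
  | C a => exact ⟨a, 0, 0, 0, by simp only [map_zero, zero_mul, add_zero]; rfl⟩
  | add p q hp hq =>
    obtain ⟨a, b, c, d, h1⟩ := hp
    obtain ⟨a', b', c', d', h2⟩ := hq
    refine ⟨a + a', b + b', c + c', d + d', ?_⟩
    rw [map_add, h1, h2]
    simp only [map_add]
    ring
  | mul_X p i hp =>
    obtain ⟨a, b, c, d, h1⟩ := hp
    rw [map_mul, h1]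
    fin_cases i
    · refine ⟨0, a, 0, c, ?_⟩
      change _ * xR k = _
      simp only [map_zero]
      linear_combination (kfC k b + kfC k d * yR k) * hx
    · refine ⟨0, 0, a, b, ?_⟩
      change _ * yR k = _
      simp only [map_zero]
      linear_combination (kfC k c + kfC k d * xR k) * hy

/-- The map from `k[x,y]` to iterated dual numbers. -/
def kfpsi (k : Type*) [Field k] : MvPolynomial (Fin 2) k →+* DualNumber (DualNumber k) :=
  MvPolynomial.eval₂Hom (R := k) (S₁ := DualNumber (DualNumber k))
    ((TrivSqZeroExt.inlHom (DualNumber k) (DualNumber k)).comp (TrivSqZeroExt.inlHom k k))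
    (fun i : Fin 2 => if i = 0 then TrivSqZeroExt.inl DualNumber.eps else DualNumber.eps)

/-- The model of `R` as iterated dual numbers. -/
def kfphi (k : Type*) [Field k] : KFR k →+* DualNumber (DualNumber k) :=
  Ideal.Quotient.lift (IKF k) (kfpsi k) (by
    intro a ha
    have hle : IKF k ≤ RingHom.ker (kfpsi k) := by
      refine Ideal.span_le.2 ?_
      rintro p (rfl | rfl)
      · simp [RingHom.mem_ker, pow_two, kfpsi, ← TrivSqZeroExt.inl_mul]
      · simp [RingHom.mem_ker, pow_two, kfpsi]
    exact hle ha)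

lemma kf_ind (k : Type*) [Field k] (a b c d : k)
    (h : kfC k a + kfC k b * xR k + kfC k c * yR k + kfC k d * (xR k * yR k) = 0) :
    a = 0 ∧ b = 0 ∧ c = 0 ∧ d = 0 := by
  have hC : ∀ t, kfphi k (kfC k t) = TrivSqZeroExt.inl (TrivSqZeroExt.inl t) := fun t => by
    change kfphi k (Ideal.Quotient.mk _ (C t)) = _
    simp [kfphi, kfpsi]
  have hX : kfphi k (xR k) = TrivSqZeroExt.inl DualNumber.eps := by
    simp [kfphi, kfpsi, xR]
  have hY : kfphi k (yR k) = DualNumber.eps := by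
    simp [kfphi, kfpsi, yR]
  have h' := congrArg (kfphi k) h
  simp only [map_add, map_mul, map_zero, hC, hX, hY] at h'
  have e1 := congrArg (fun z => z.fst.fst) h'
  have e2 := congrArg (fun z => z.fst.snd) h'
  have e3 := congrArg (fun z => z.snd.fst) h'
  have e4 := congrArg (fun z => z.snd.snd) h'
  simp at e1 e2 e3 e4
  exact ⟨e1, e2, e3, e4⟩

lemma kf_mk0 (k : Type*) [Field k] (r : KFR k) : mk0 k r = 0 ↔ ∃ s, r = xR k * s := by
  rw [mk0, Ideal.Quotient.eq_zero_iff_mem, Ideal.mem_span_singleton]; rfl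
lemma kf_mk1 (k : Type*) [Field k] (r : KFR k) : mk1 k r = 0 ↔ ∃ s, r = yR k * s := by
  rw [mk1, Ideal.Quotient.eq_zero_iff_mem, Ideal.mem_span_singleton]; rfl
lemma kf_mkinf (k : Type*) [Field k] (r : KFR k) :
    mkinf k r = 0 ↔ ∃ s, r = (xR k + yR k) * s := by
  rw [mkinf, Ideal.Quotient.eq_zero_iff_mem, Ideal.mem_span_singleton]; rfl

lemma kf_rep0 (k : Type*) [Field k] (m : M0 k) :
    ∃ a c : k, m = mk0 k (kfC k a + kfC k c * yR k) := by
  obtain ⟨r, rfl⟩ := Ideal.Quotient.mk_surjective m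
  obtain ⟨a, b, c, d, rfl⟩ := kf_rep k r
  refine ⟨a, c, ?_⟩
  change mk0 k _ = _
  rw [← sub_eq_zero, ← map_sub, kf_mk0]
  exact ⟨kfC k b + kfC k d * yR k, by ring⟩

lemma kf_rep1 (k : Type*) [Field k] (m : M1 k) :
    ∃ a c : k, m = mk1 k (kfC k a + kfC k c * xR k) := by
  obtain ⟨r, rfl⟩ := Ideal.Quotient.mk_surjective m
  obtain ⟨a, b, c, d, rfl⟩ := kf_rep k r
  refine ⟨a, b, ?_⟩
  change mk1 k _ = _
  rw [← sub_eq_zero, ← map_sub, kf_mk1]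
  exact ⟨kfC k c + kfC k d * xR k, by ring⟩

lemma kf_repinf (k : Type*) [Field k] (m : Minf k) :
    ∃ a c : k, m = mkinf k (kfC k a + kfC k c * xR k) := by
  obtain ⟨r, rfl⟩ := Ideal.Quotient.mk_surjective m
  obtain ⟨a, b, c, d, rfl⟩ := kf_rep k r
  refine ⟨a, b - c, ?_⟩
  change mkinf k _ = _
  rw [← sub_eq_zero, ← map_sub, kf_mkinf, map_sub]
  exact ⟨kfC k c + kfC k d * xR k, by linear_combination -kfC k d * kf_xx k⟩

lemma kf_ind0 (k : Type*) [Field k] (a c : k)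
    (h : mk0 k (kfC k a + kfC k c * yR k) = 0) : a = 0 ∧ c = 0 := by
  obtain ⟨s, hs⟩ := (kf_mk0 k _).1 h
  obtain ⟨p, q, r, t, rfl⟩ := kf_rep k s
  have := kf_ind k a (-p) c (-r) (by
    simp only [map_neg]
    linear_combination hs + (kfC k q + kfC k t * yR k) * kf_xx k)
  tauto

lemma kf_ind1 (k : Type*) [Field k] (a c : k)
    (h : mk1 k (kfC k a + kfC k c * xR k) = 0) : a = 0 ∧ c = 0 := by
  obtain ⟨s, hs⟩ := (kf_mk1 k _).1 h
  obtain ⟨p, q, r, t, rfl⟩ := kf_rep k s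
  have := kf_ind k a c (-p) (-q) (by
    simp only [map_neg]
    linear_combination hs + (kfC k r + kfC k t * xR k) * kf_yy k)
  tauto

lemma kf_indinf (k : Type*) [Field k] (a c : k)
    (h : mkinf k (kfC k a + kfC k c * xR k) = 0) : a = 0 ∧ c = 0 := by
  obtain ⟨s, hs⟩ := (kf_mkinf k _).1 h
  obtain ⟨p, q, r, t, rfl⟩ := kf_rep k s
  have := kf_ind k a (c - p) (-p) (-(q + r)) (by
    simp only [map_neg, map_sub, map_add]
    linear_combination hs + (kfC k q + kfC k t * yR k) * kf_xx k +
      (kfC k r + kfC k t * xR k) * kf_yy k)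
  obtain ⟨h1, h2, h3, h4⟩ := this
  refine ⟨h1, ?_⟩
  linear_combination h2 - h3

lemma kf_yinf (k : Type*) [Field k] [CharP k 2] : mkinf k (yR k) = mkinf k (xR k) := by
  have h2 : (2 : KFR k) = 0 := by
    have := congrArg (kfC k) (CharTwo.two_eq_zero (R := k))
    rwa [map_zero, map_ofNat] at this
  rw [← sub_eq_zero, ← map_sub, kf_mkinf]
  exact ⟨1, by linear_combination -xR k * h2⟩

lemma kf_socR (k : Type*) [Field k] (r : KFR k) :
    r ∈ SocR k ↔ ∃ c, r = kfC k c * (xR k * yR k) := by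
  have hx := kf_xx k
  have hy := kf_yy k
  constructor
  · rintro ⟨h1, h2⟩
    obtain ⟨a, b, c, d, rfl⟩ := kf_rep k r
    have e1 := kf_ind k 0 a 0 c (by
      simp only [map_zero]
      linear_combination h1 - (kfC k b + kfC k d * yR k) * hx)
    have e2 := kf_ind k 0 0 a b (by
      simp only [map_zero]
      linear_combination h2 - (kfC k c + kfC k d * xR k) * hy)
    obtain ⟨-, rfl, -, rfl⟩ := e1
    obtain ⟨-, -, -, rfl⟩ := e2
    exact ⟨d, by simp⟩
  · rintro ⟨c, rfl⟩
    exact ⟨by linear_combination kfC k c * yR k * hx, by linear_combination kfC k c * xR k * hy⟩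

lemma kf_soc0 (k : Type*) [Field k] (m : M0 k) :
    m ∈ SocM0 k ↔ ∃ c, m = mk0 k (kfC k c * yR k) := by
  have hy := kf_yy k
  constructor
  · rintro ⟨h1, h2⟩
    obtain ⟨a, c, rfl⟩ := kf_rep0 k m
    have e := kf_ind0 k 0 a (by
      rw [← h2, ← map_mul]
      congr 1
      simp only [map_zero]
      linear_combination -kfC k c * hy)
    obtain ⟨-, rfl⟩ := e
    exact ⟨c, by simp⟩
  · rintro ⟨c, rfl⟩
    refine ⟨?_, ?_⟩
    · rw [← map_mul, kf_mk0]; exact ⟨_, rfl⟩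
    · rw [← map_mul, kf_mk0]; exact ⟨0, by linear_combination kfC k c * hy⟩

lemma kf_soc1 (k : Type*) [Field k] (m : M1 k) :
    m ∈ SocM1 k ↔ ∃ c, m = mk1 k (kfC k c * xR k) := by
  have hx := kf_xx k
  constructor
  · rintro ⟨h1, h2⟩
    obtain ⟨a, c, rfl⟩ := kf_rep1 k m
    have e := kf_ind1 k 0 a (by
      rw [← h1, ← map_mul]
      congr 1
      simp only [map_zero]
      linear_combination -kfC k c * hx)
    obtain ⟨-, rfl⟩ := e
    exact ⟨c, by simp⟩
  · rintro ⟨c, rfl⟩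
    refine ⟨?_, ?_⟩
    · rw [← map_mul, kf_mk1]; exact ⟨0, by linear_combination kfC k c * hx⟩
    · rw [← map_mul, kf_mk1]; exact ⟨_, rfl⟩

lemma kf_socinf (k : Type*) [Field k] (m : Minf k) :
    m ∈ SocMinf k ↔ ∃ c, m = mkinf k (kfC k c * xR k) := by
  have hx := kf_xx k
  constructor
  · rintro ⟨h1, h2⟩
    obtain ⟨a, c, rfl⟩ := kf_repinf k m
    have e := kf_indinf k 0 a (by
      rw [← h1, ← map_mul]
      congr 1
      simp only [map_zero]
      linear_combination -kfC k c * hx)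
    obtain ⟨-, rfl⟩ := e
    exact ⟨c, by simp⟩
  · rintro ⟨c, rfl⟩
    refine ⟨?_, ?_⟩
    · rw [← map_mul, kf_mkinf]; exact ⟨0, by linear_combination kfC k c * hx⟩
    · rw [← map_mul, kf_mkinf]; exact ⟨kfC k c * xR k, by linear_combination -kfC k c * hx⟩

set_option maxSynthPendingDepth 3 in
/-- For `k` of characteristic `2` and `R = k[x,y]/(x²,y²)` with the maps `ε, h, g, f`
as in the complex `⋯ →g M₀×M₁×M∞ →f R×k×k →g M₀×M₁×M∞ →h R →ε k → 0`:
`Soc(R) = k·(xy)`, `Soc(M₀) = k·ȳ`, `Soc(M₁) = k·x̄`, `Soc(M∞) = k·x̄`, `Soc(k) = k`;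
the maps carry `Soc` into `Soc`; `ε` vanishes on `Soc(R)`; `h` maps
`Soc(M₀)×Soc(M₁)×Soc(M∞)` onto `Soc(R)`; and the ranges of the restrictions of
`g`, `f`, `g` equal the kernels of the restrictions of `h`, `g`, `f` respectively.
Consequently the `Soc`-subcomplex has cohomology `k` in degree `0` and zero
cohomology in every other degree. -/
theorem stmt12 (k : Type*) [Field k] [CharP k 2]
    -- ε : R → k is the augmentation (evaluation at x = y = 0):
    (ε : KFR k → k)
    (hε : ∀ P : MvPolynomial (Fin 2) k,
      ε (Ideal.Quotient.mk (IKF k) P) = MvPolynomial.aeval (fun _ : Fin 2 => (0 : k)) P)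
    -- the induced augmentations on M₀, M₁, M∞:
    (ε0 : M0 k → k) (hε0 : ∀ a : KFR k, ε0 (mk0 k a) = ε a)
    (ε1 : M1 k → k) (hε1 : ∀ a : KFR k, ε1 (mk1 k a) = ε a)
    (εinf : Minf k → k) (hεinf : ∀ a : KFR k, εinf (mkinf k a) = ε a)
    -- multiplication by x, y, x+y as well-defined maps M₀ → R, M₁ → R, M∞ → R:
    (μ0 : M0 k → KFR k) (hμ0 : ∀ a : KFR k, μ0 (mk0 k a) = xR k * a)
    (μ1 : M1 k → KFR k) (hμ1 : ∀ a : KFR k, μ1 (mk1 k a) = yR k * a)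
    (μinf : Minf k → KFR k) (hμinf : ∀ a : KFR k, μinf (mkinf k a) = (xR k + yR k) * a)
    -- the maps h, g, f:
    (h : M0 k × M1 k × Minf k → KFR k)
    (hh : ∀ m : M0 k × M1 k × Minf k, h m = μ0 m.1 + μ1 m.2.1 + μinf m.2.2)
    (g : KFR k × k × k → M0 k × M1 k × Minf k)
    (hg : ∀ v : KFR k × k × k,
      g v = (mk0 k v.1 + algebraMap k (M0 k) v.2.2 * mk0 k (yR k),
             mk1 k v.1 + algebraMap k (M1 k) v.2.1 * mk1 k (xR k),
             mkinf k v.1 + algebraMap k (Minf k) v.2.1 * mkinf k (xR k)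
               + algebraMap k (Minf k) v.2.2 * mkinf k (yR k)))
    (f : M0 k × M1 k × Minf k → KFR k × k × k)
    (hf : ∀ m : M0 k × M1 k × Minf k,
      f m = (μ0 m.1 + μ1 m.2.1 + μinf m.2.2,
             ε0 m.1 + εinf m.2.2,
             ε1 m.2.1 + εinf m.2.2)) :
    -- Soc(R) = k·(xy), Soc(M₀) = k·ȳ, Soc(M₁) = k·x̄, Soc(M∞) = k·x̄, Soc(k) = k:
    SocR k = Set.range (fun c : k => algebraMap k (KFR k) c * (xR k * yR k)) ∧
    SocM0 k = Set.range (fun c : k => algebraMap k (M0 k) c * mk0 k (yR k)) ∧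
    SocM1 k = Set.range (fun c : k => algebraMap k (M1 k) c * mk1 k (xR k)) ∧
    SocMinf k = Set.range (fun c : k => algebraMap k (Minf k) c * mkinf k (xR k)) ∧
    {c : k | ε (xR k) * c = 0 ∧ ε (yR k) * c = 0} = Set.univ ∧
    -- the maps h, g, f carry Soc into Soc (for ε this is trivial since Soc(k) = k):
    (∀ m ∈ SocM0 k ×ˢ SocM1 k ×ˢ SocMinf k, h m ∈ SocR k) ∧
    (∀ v ∈ SocR k ×ˢ (Set.univ : Set k) ×ˢ (Set.univ : Set k),
      g v ∈ SocM0 k ×ˢ SocM1 k ×ˢ SocMinf k) ∧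
    (∀ m ∈ SocM0 k ×ˢ SocM1 k ×ˢ SocMinf k,
      f m ∈ SocR k ×ˢ (Set.univ : Set k) ×ˢ (Set.univ : Set k)) ∧
    -- ε vanishes on Soc(R):
    (∀ r ∈ SocR k, ε r = 0) ∧
    -- the range of the restriction of h equals Soc(R):
    h '' (SocM0 k ×ˢ SocM1 k ×ˢ SocMinf k) = SocR k ∧
    -- range of the restriction of g = kernel of the restriction of h:
    g '' (SocR k ×ˢ (Set.univ : Set k) ×ˢ (Set.univ : Set k)) =
      {m ∈ SocM0 k ×ˢ SocM1 k ×ˢ SocMinf k | h m = 0} ∧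
    -- range of the restriction of f = kernel of the restriction of g:
    f '' (SocM0 k ×ˢ SocM1 k ×ˢ SocMinf k) =
      {v ∈ SocR k ×ˢ (Set.univ : Set k) ×ˢ (Set.univ : Set k) | g v = 0} ∧
    -- range of the restriction of g = kernel of the restriction of f:
    g '' (SocR k ×ˢ (Set.univ : Set k) ×ˢ (Set.univ : Set k)) =
      {m ∈ SocM0 k ×ˢ SocM1 k ×ˢ SocMinf k | f m = 0} := by
  have hx := kf_xx k
  have hy := kf_yy k
  have S0 := kf_soc0 k
  have S1 := kf_soc1 k
  have Si := kf_socinf k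
  have SR := kf_socR k
  have ex : ε (xR k) = 0 := by rw [xR, hε]; simp
  have ey : ε (yR k) = 0 := by rw [yR, hε]; simp
  have ecx : ∀ c, ε (kfC k c * xR k) = 0 := fun c => by
    change ε (Ideal.Quotient.mk _ (C c * X 0)) = 0
    rw [hε]; simp
  have ecy : ∀ c, ε (kfC k c * yR k) = 0 := fun c => by
    change ε (Ideal.Quotient.mk _ (C c * X 1)) = 0
    rw [hε]; simp
  have ecxy : ∀ c, ε (kfC k c * (xR k * yR k)) = 0 := fun c => by
    change ε (Ideal.Quotient.mk _ (C c * (X 0 * X 1))) = 0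
    rw [hε]; simp
  -- values on the socles
  have H : ∀ a b c : k, h (mk0 k (kfC k a * yR k), mk1 k (kfC k b * xR k),
      mkinf k (kfC k c * xR k)) = kfC k (a + b + c) * (xR k * yR k) := fun a b c => by
    rw [hh]
    simp only [hμ0, hμ1, hμinf, map_add]
    linear_combination kfC k c * hx
  have F : ∀ a b c : k, f (mk0 k (kfC k a * yR k), mk1 k (kfC k b * xR k),
      mkinf k (kfC k c * xR k)) = (kfC k (a + b + c) * (xR k * yR k), 0, 0) := fun a b c => by
    rw [hf]
    simp only [hμ0, hμ1, hμinf, hε0, hε1, hεinf, ecx, ecy, map_add, add_zero, Prod.mk.injEq,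
      and_true]
    linear_combination kfC k c * hx
  have G : ∀ d b c : k, g (kfC k d * (xR k * yR k), b, c) = (mk0 k (kfC k c * yR k),
      mk1 k (kfC k b * xR k), mkinf k (kfC k (b + c) * xR k)) := fun d b c => by
    have z0 : mk0 k (kfC k d * (xR k * yR k)) = 0 :=
      (kf_mk0 k _).2 ⟨kfC k d * yR k, by ring⟩
    have z1 : mk1 k (kfC k d * (xR k * yR k)) = 0 :=
      (kf_mk1 k _).2 ⟨kfC k d * xR k, by ring⟩
    have zi : mkinf k (kfC k d * (xR k * yR k)) = 0 :=
      (kf_mkinf k _).2 ⟨kfC k d * xR k, by linear_combination -kfC k d * hx⟩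
    rw [hg]
    simp only [z0, z1, zi, zero_add]
    refine Prod.ext ?_ (Prod.ext ?_ ?_)
    · simp only [map_mul]; rfl
    · simp only [map_mul]; rfl
    · simp only [map_mul, map_add, add_mul, kf_yinf]; rfl
  have R0 : ∀ c : k, kfC k c * (xR k * yR k) = 0 → c = 0 := fun c hc =>
    (kf_ind k 0 0 0 c (by simpa using hc)).2.2.2
  have N0 : ∀ c : k, mk0 k (kfC k c * yR k) = 0 → c = 0 := fun c hc =>
    (kf_ind0 k 0 c (by simpa using hc)).2
  have N1 : ∀ c : k, mk1 k (kfC k c * xR k) = 0 → c = 0 := fun c hc =>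
    (kf_ind1 k 0 c (by simpa using hc)).2
  have T : ∀ b c : k, c + b + (b + c) = 0 := fun b c => by
    linear_combination (b + c) * CharTwo.two_eq_zero (R := k)
  have T' : ∀ a b c : k, a + b + c = 0 → c = b + a := fun a b c e => by
    linear_combination e - (a + b) * CharTwo.two_eq_zero (R := k)
  -- parametrizations of the domains
  have D : ∀ m : M0 k × M1 k × Minf k, m ∈ SocM0 k ×ˢ SocM1 k ×ˢ SocMinf k ↔
      ∃ a b c, m = (mk0 k (kfC k a * yR k), mk1 k (kfC k b * xR k),
        mkinf k (kfC k c * xR k)) := by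
    rintro ⟨m0, m1, mi⟩
    simp only [Set.mem_prod, S0, S1, Si, Prod.mk.injEq]
    constructor
    · rintro ⟨⟨a, h1⟩, ⟨b, h2⟩, ⟨c, h3⟩⟩; exact ⟨a, b, c, h1, h2, h3⟩
    · rintro ⟨a, b, c, h1, h2, h3⟩; exact ⟨⟨a, h1⟩, ⟨b, h2⟩, ⟨c, h3⟩⟩
  have E : ∀ v : KFR k × k × k,
      v ∈ SocR k ×ˢ (Set.univ : Set k) ×ˢ (Set.univ : Set k) ↔
      ∃ d b c, v = (kfC k d * (xR k * yR k), b, c) := by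
    rintro ⟨r, b, c⟩
    simp only [Set.mem_prod, SR, Prod.mk.injEq, Set.mem_univ, and_true]
    constructor
    · rintro ⟨d, h1⟩; exact ⟨d, b, c, h1, rfl, rfl⟩
    · rintro ⟨d, _, _, h1, -, -⟩; exact ⟨d, h1⟩
  refine ⟨?_, ?_, ?_, ?_, ?_, ?_, ?_, ?_, ?_, ?_, ?_, ?_, ?_⟩
  · ext r; rw [SR]
    exact ⟨fun ⟨c, e⟩ => ⟨c, e.symm⟩, fun ⟨c, e⟩ => ⟨c, e.symm⟩⟩
  · ext r; rw [S0]
    exact ⟨fun ⟨c, e⟩ => ⟨c, by rw [e, map_mul]; rfl⟩,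
      fun ⟨c, e⟩ => ⟨c, by rw [← e, map_mul]; rfl⟩⟩
  · ext r; rw [S1]
    exact ⟨fun ⟨c, e⟩ => ⟨c, by rw [e, map_mul]; rfl⟩,
      fun ⟨c, e⟩ => ⟨c, by rw [← e, map_mul]; rfl⟩⟩
  · ext r; rw [Si]
    exact ⟨fun ⟨c, e⟩ => ⟨c, by rw [e, map_mul]; rfl⟩,
      fun ⟨c, e⟩ => ⟨c, by rw [← e, map_mul]; rfl⟩⟩
  · ext c; simp [ex, ey]
  · intro m hm
    obtain ⟨a, b, c, rfl⟩ := (D m).1 hm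
    rw [H, SR]; exact ⟨_, rfl⟩
  · intro v hv
    obtain ⟨d, b, c, rfl⟩ := (E v).1 hv
    rw [G, D]; exact ⟨_, _, _, rfl⟩
  · intro m hm
    obtain ⟨a, b, c, rfl⟩ := (D m).1 hm
    rw [F, E]; exact ⟨_, _, _, rfl⟩
  · intro r hr
    obtain ⟨c, rfl⟩ := (SR r).1 hr
    exact ecxy c
  · ext r
    constructor
    · rintro ⟨m, hm, rfl⟩
      obtain ⟨a, b, c, rfl⟩ := (D m).1 hm
      rw [H, SR]; exact ⟨_, rfl⟩
    · intro hr
      obtain ⟨d, rfl⟩ := (SR r).1 hr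
      exact ⟨_, (D _).2 ⟨d, 0, 0, rfl⟩, by rw [H]; simp⟩
  · ext m
    constructor
    · rintro ⟨v, hv, rfl⟩
      obtain ⟨d, b, c, rfl⟩ := (E v).1 hv
      rw [G]
      exact ⟨(D _).2 ⟨_, _, _, rfl⟩, by rw [H, T]; simp⟩
    · rintro ⟨hm, h0⟩
      obtain ⟨a, b, c, rfl⟩ := (D m).1 hm
      rw [H] at h0
      exact ⟨_, (E _).2 ⟨0, b, a, rfl⟩, by rw [G, T' a b c (R0 _ h0)]⟩
  · ext v
    constructor
    · rintro ⟨m, hm, rfl⟩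
      obtain ⟨a, b, c, rfl⟩ := (D m).1 hm
      rw [F]
      exact ⟨(E _).2 ⟨_, _, _, rfl⟩, by rw [G]; simp⟩
    · rintro ⟨hv, h0⟩
      obtain ⟨d, b, c, rfl⟩ := (E v).1 hv
      rw [G] at h0
      have hc := N0 c (congrArg (fun z => z.1) h0)
      have hb := N1 b (congrArg (fun z => z.2.1) h0)
      subst hc hb
      exact ⟨_, (D _).2 ⟨d, 0, 0, rfl⟩, by rw [F]; simp⟩
  · ext m
    constructor
    · rintro ⟨v, hv, rfl⟩
      obtain ⟨d, b, c, rfl⟩ := (E v).1 hv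
      rw [G]
      exact ⟨(D _).2 ⟨_, _, _, rfl⟩, by rw [F, T]; simp⟩
    · rintro ⟨hm, h0⟩
      obtain ⟨a, b, c, rfl⟩ := (D m).1 hm
      rw [F] at h0
      exact ⟨_, (E _).2 ⟨0, b, a, rfl⟩,
        by rw [G, T' a b c (R0 _ (congrArg (fun z => z.1) h0))]⟩
end
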